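/- arXiv:2205.14712 — 5 statements merged into one kernel-verified Lean document; each statement's English description precedes it below -/
import Mathlib

section
/- For every positive integer n, the function 𝓡ₙ(t) = (t−1)^{−(2n−1)} · Σ_{j=0}^{2n−1} (C(2n−1,j))² t^j is strictly decreasing on the open interval (1, ∞). -/
/-!
Put `N = 2n - 1 ≥ 1`. Each summand of `𝓡ₙ` is a positive multiple of
`t ^ j / (t - 1) ^ N = (t / (t - 1)) ^ j * (1 / (t - 1)) ^ (N - j)`,
a product of `N` factors, each positive and strictly decreasing on `(1, ∞)`
(note `t / (t - 1) = 1 + 1 / (t - 1)`). So every summand is strictly decreasing.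
-/

/-- The function `t ^ j / (t - 1) ^ (j + m)` is strictly decreasing on `(1, ∞)`. -/
theorem pow_div_sub_one_pow_lt {a b : ℝ} (ha : 1 < a) (hab : a < b) (j m : ℕ)
    (hjm : 1 ≤ j + m) :
    b ^ j / (b - 1) ^ (j + m) < a ^ j / (a - 1) ^ (j + m) := by
  have ha1 : 0 < a - 1 := by linarith
  have hb1 : 0 < b - 1 := by linarith
  rw [div_lt_div_iff₀ (by positivity) (by positivity), pow_add, pow_add, ← mul_assoc,
    ← mul_assoc, ← mul_pow, ← mul_pow]
  have h0 : 0 < b * (a - 1) := mul_pos (by linarith) ha1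
  have h1 : b * (a - 1) < a * (b - 1) := by nlinarith
  have h2 : a - 1 < b - 1 := by linarith
  rcases Nat.eq_zero_or_pos m with rfl | hm
  · simpa using pow_lt_pow_left₀ h1 h0.le (by omega : j ≠ 0)
  · exact mul_lt_mul' (pow_le_pow_left₀ h0.le h1.le j)
      (pow_lt_pow_left₀ h2 ha1.le (by omega)) (by positivity) (pow_pos (h0.trans h1) j)

/-- For every positive integer `n`, the function
`𝓡ₙ(t) = (t-1)^{-(2n-1)} ∑_{j=0}^{2n-1} C(2n-1,j)² t^j` is strictly decreasing on `(1, ∞)`. -/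
theorem stmt_4 (n : ℕ) (hn : 1 ≤ n) :
    StrictAntiOn
      (fun t : ℝ => (∑ j ∈ Finset.range (2 * n), ((2 * n - 1).choose j : ℝ) ^ 2 * t ^ j)
        / (t - 1) ^ (2 * n - 1))
      (Set.Ioi 1) := by
  intro a ha b _ hab
  simp only [Finset.sum_div, mul_div_assoc]
  refine Finset.sum_lt_sum_of_nonempty (Finset.nonempty_range_iff.2 (by omega)) fun j hj => ?_
  have hj' : j ≤ 2 * n - 1 := by
    have := Finset.mem_range.1 hj
    omega
  have hc : (0 : ℝ) < (2 * n - 1).choose j := by exact_mod_cast Nat.choose_pos hj'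
  have key := pow_div_sub_one_pow_lt ha hab j (2 * n - 1 - j) (by omega)
  rw [Nat.add_sub_cancel' hj'] at key
  exact mul_lt_mul_of_pos_left key (by positivity)
end

section
/- For every real number φ with 0 < φ < π, setting t = (cos φ + 1)/(cos φ − 1) one has 𝓡₂(t) = (1/8)(3 cos φ + 5 cos 3φ). (This is the angle form of the one-crossing Margulis invariant contribution in ℝ^{4,3}, used in Remark 3.9 and Proposition 5.3 of the paper.) -/
/-- For `0 < φ < π`, setting `t = (cos φ + 1)/(cos φ - 1)`, one has
`𝓡₂(t) = (1/8)(3 cos φ + 5 cos 3φ)`. -/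
theorem stmt_8 (φ : ℝ) (h0 : 0 < φ) (hπ : φ < Real.pi) :
    (1 + 9 * ((Real.cos φ + 1) / (Real.cos φ - 1))
      + 9 * ((Real.cos φ + 1) / (Real.cos φ - 1)) ^ 2
      + ((Real.cos φ + 1) / (Real.cos φ - 1)) ^ 3)
      / ((Real.cos φ + 1) / (Real.cos φ - 1) - 1) ^ 3
    = (1 / 8) * (3 * Real.cos φ + 5 * Real.cos (3 * φ)) := by
  have hc : Real.cos φ < 1 := by
    have h := Real.cos_lt_cos_of_nonneg_of_le_pi le_rfl hπ.le h0
    rwa [Real.cos_zero] at h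
  rw [Real.cos_three_mul]
  generalize Real.cos φ = c at hc ⊢
  have hne : c - 1 ≠ 0 := by linarith
  -- Clearing `c - 1` from the denominator cube leaves the constant `8`.
  have ht : (c + 1) / (c - 1) - 1 = 2 / (c - 1) := by
    field_simp
    ring
  rw [ht]
  field_simp
  ring
end

section
/- Define s(φ₁, φ₂) = (1/8)(3 cos φ₁ + 5 cos 3φ₁) + (1/8)(3 cos φ₂ + 5 cos 3φ₂). For all real numbers φ₁, φ₂ with φ₁ ≥ 0, φ₂ ≥ 0 and φ₁ + φ₂ ≤ π/3, one has s(φ₁, φ₂) ≥ 9/16 > 0, with equality if and only if (φ₁, φ₂) = (0, π/3) or (φ₁, φ₂) = (π/3, 0). -/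
/-!
Put `σ = (φ₁ + φ₂) / 2` and `δ = (φ₁ - φ₂) / 2`, so that `|δ| ≤ σ ≤ π / 6`. The sum-to-product
formulas turn `s` into `(3 cos σ cos δ + 5 cos 3σ cos 3δ) / 4`. Both `cos σ` and `cos δ` are at
least `√3 / 2`, and `cos 3σ`, `cos 3δ` are nonnegative, so `s ≥ (3 / 4) (√3 / 2) ^ 2 = 9 / 16`.
Equality forces `cos σ = cos δ = √3 / 2`, that is `σ = |δ| = π / 6`.
-/

/-- On `|x| ≤ π / 6` the cosine is at least `√3 / 2`, attained only at the two endpoints. -/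
lemma sqrt_three_div_two_le_cos {x : ℝ} (hx : |x| ≤ Real.pi / 6) :
    √3 / 2 ≤ Real.cos x ∧ (Real.cos x = √3 / 2 → |x| = Real.pi / 6) := by
  have hpi := Real.pi_pos
  rw [← Real.cos_abs x, ← Real.cos_pi_div_six]
  refine ⟨Real.cos_le_cos_of_nonneg_of_le_pi (abs_nonneg x) (by linarith) hx, fun hc => ?_⟩
  exact Real.injOn_cos ⟨abs_nonneg x, by linarith⟩ ⟨by linarith, by linarith⟩ hc

lemma cos_three_mul_nonneg {x : ℝ} (hx : |x| ≤ Real.pi / 6) : 0 ≤ Real.cos (3 * x) := by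
  have := abs_le.1 hx
  exact Real.cos_nonneg_of_mem_Icc ⟨by linarith, by linarith⟩

/-- For `s(φ₁, φ₂) = (1/8)(3 cos φ₁ + 5 cos 3φ₁) + (1/8)(3 cos φ₂ + 5 cos 3φ₂)` and all
`φ₁, φ₂ ≥ 0` with `φ₁ + φ₂ ≤ π/3`, one has `s(φ₁, φ₂) ≥ 9/16 > 0`, with equality iff
`(φ₁, φ₂) = (0, π/3)` or `(φ₁, φ₂) = (π/3, 0)`. -/
theorem stmt_10 (φ₁ φ₂ : ℝ) (h₁ : 0 ≤ φ₁) (h₂ : 0 ≤ φ₂) (h : φ₁ + φ₂ ≤ Real.pi / 3) :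
    (9 : ℝ) / 16 > 0 ∧
    (9 : ℝ) / 16 ≤ (1 / 8) * (3 * Real.cos φ₁ + 5 * Real.cos (3 * φ₁))
      + (1 / 8) * (3 * Real.cos φ₂ + 5 * Real.cos (3 * φ₂)) ∧
    ((1 / 8) * (3 * Real.cos φ₁ + 5 * Real.cos (3 * φ₁))
      + (1 / 8) * (3 * Real.cos φ₂ + 5 * Real.cos (3 * φ₂)) = 9 / 16 ↔
      (φ₁ = 0 ∧ φ₂ = Real.pi / 3) ∨ (φ₁ = Real.pi / 3 ∧ φ₂ = 0)) := by
  obtain ⟨σ, hσ⟩ : ∃ σ, σ = (φ₁ + φ₂) / 2 := ⟨_, rfl⟩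
  obtain ⟨δ, hδ⟩ : ∃ δ, δ = (φ₁ - φ₂) / 2 := ⟨_, rfl⟩
  have e₁ : φ₁ = σ + δ := by linarith
  have e₂ : φ₂ = σ - δ := by linarith
  have hs : (1 / 8) * (3 * Real.cos φ₁ + 5 * Real.cos (3 * φ₁))
      + (1 / 8) * (3 * Real.cos φ₂ + 5 * Real.cos (3 * φ₂))
      = (3 * (Real.cos σ * Real.cos δ) + 5 * (Real.cos (3 * σ) * Real.cos (3 * δ))) / 4 := by
    rw [e₁, e₂, mul_add 3 σ δ, mul_sub 3 σ δ]
    simp only [Real.cos_add, Real.cos_sub]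
    ring
  have aσ : |σ| ≤ Real.pi / 6 := abs_le.2 ⟨by linarith, by linarith⟩
  have aδ : |δ| ≤ Real.pi / 6 := abs_le.2 ⟨by linarith, by linarith⟩
  obtain ⟨cσ, eσ⟩ := sqrt_three_div_two_le_cos aσ
  obtain ⟨cδ, eδ⟩ := sqrt_three_div_two_le_cos aδ
  have h3 := mul_nonneg (cos_three_mul_nonneg aσ) (cos_three_mul_nonneg aδ)
  have hr : √3 * √3 = 3 := Real.mul_self_sqrt (by norm_num)
  have hr0 : 0 < √3 := Real.sqrt_pos.2 (by norm_num)
  refine ⟨by norm_num, ?_, ?_, ?_⟩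
  · rw [hs]
    nlinarith
  · intro heq
    rw [hs] at heq
    have hσ' : |σ| = Real.pi / 6 := eσ (le_antisymm (by nlinarith) cσ)
    have hδ' : |δ| = Real.pi / 6 := eδ (le_antisymm (by nlinarith) cδ)
    rw [abs_of_nonneg (by linarith)] at hσ'
    rcases abs_choice δ with hd | hd <;> rw [hd] at hδ'
    · exact Or.inr ⟨by linarith, by linarith⟩
    · exact Or.inl ⟨by linarith, by linarith⟩
  · have h3pi : 3 * (Real.pi / 3) = Real.pi := by ring
    rintro (⟨h, h'⟩ | ⟨h, h'⟩) <;> rw [h, h', h3pi] <;> norm_num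
end

section
/- Let λ > 1 + √2 be a real number, set D = 1 − 6λ² + λ⁴ (which is positive), p = (λ² − 1 + √D)/2 and q = (λ² − 1 − √D)/2. Then, using the cross-ratio convention [z₁, z₂; z₃, z₄] = ((z₃ − z₁)/(z₃ − z₂)) · ((z₄ − z₂)/(z₄ − z₁)), one has [p, q; 1/q, 1/p] = (λ² − 1)²/(4λ²). -/
/-!
The numbers `p` and `q` are the roots of `x² - (λ² - 1) x + λ²`, so the cross-ratio, being symmetric
in `p` and `q`, is a function of `p + q = λ² - 1` and `p q = λ²`; the lemma
`crossRatio_of_sum_prod` computes it. Positivity of `D` follows from its factorization into two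
quadratics, both positive for `λ > 1 + √2`.
-/

/-- If `p + q = L - 1` and `p q = L` with `L ≠ 0`, then
`[p, q; 1/q, 1/p] = (1 - pq)² / ((1 - p²)(1 - q²))`, and
`(1 - p²)(1 - q²) = (1 + pq)² - (p + q)² = 4L`; so none of the denominators vanishes. -/
lemma crossRatio_of_sum_prod {p q L : ℝ} (hL : L ≠ 0) (hs : p + q = L - 1) (hm : p * q = L) :
    (q⁻¹ - p) / (q⁻¹ - q) * ((p⁻¹ - q) / (p⁻¹ - p)) = (L - 1) ^ 2 / (4 * L) := by
  have hp : p ≠ 0 := left_ne_zero_of_mul (hm.trans_ne hL)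
  have hq : q ≠ 0 := right_ne_zero_of_mul (hm.trans_ne hL)
  have hprod : (1 - q ^ 2) * (1 - p ^ 2) = 4 * L := by
    have h : (1 - q ^ 2) * (1 - p ^ 2) = (1 + p * q) ^ 2 - (p + q) ^ 2 := by ring
    rw [h, hs, hm]; ring
  have e1 : q⁻¹ - p = (1 - L) / q := by rw [← hm]; field_simp
  have e2 : q⁻¹ - q = (1 - q ^ 2) / q := by field_simp
  have e3 : p⁻¹ - q = (1 - L) / p := by rw [← hm]; field_simp
  have e4 : p⁻¹ - p = (1 - p ^ 2) / p := by field_simp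
  rw [e1, e2, e3, e4, div_div_div_cancel_right₀ hq, div_div_div_cancel_right₀ hp,
    div_mul_div_comm, hprod]
  ring

/-- For `λ > 1 + √2`, with `D = 1 - 6λ² + λ⁴ > 0`, `p = (λ² - 1 + √D)/2`,
`q = (λ² - 1 - √D)/2`, the cross-ratio `[p, q; 1/q, 1/p]` equals `(λ² - 1)²/(4λ²)`. -/
theorem stmt_12 (lam : ℝ) (hlam : 1 + Real.sqrt 2 < lam) :
    0 < 1 - 6 * lam ^ 2 + lam ^ 4 ∧
    (((lam ^ 2 - 1 - Real.sqrt (1 - 6 * lam ^ 2 + lam ^ 4)) / 2)⁻¹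
        - (lam ^ 2 - 1 + Real.sqrt (1 - 6 * lam ^ 2 + lam ^ 4)) / 2)
      / (((lam ^ 2 - 1 - Real.sqrt (1 - 6 * lam ^ 2 + lam ^ 4)) / 2)⁻¹
        - (lam ^ 2 - 1 - Real.sqrt (1 - 6 * lam ^ 2 + lam ^ 4)) / 2)
      * ((((lam ^ 2 - 1 + Real.sqrt (1 - 6 * lam ^ 2 + lam ^ 4)) / 2)⁻¹
        - (lam ^ 2 - 1 - Real.sqrt (1 - 6 * lam ^ 2 + lam ^ 4)) / 2)
      / (((lam ^ 2 - 1 + Real.sqrt (1 - 6 * lam ^ 2 + lam ^ 4)) / 2)⁻¹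
        - (lam ^ 2 - 1 + Real.sqrt (1 - 6 * lam ^ 2 + lam ^ 4)) / 2))
    = (lam ^ 2 - 1) ^ 2 / (4 * lam ^ 2) := by
  have h2 : Real.sqrt 2 ^ 2 = 2 := Real.sq_sqrt (by norm_num)
  have h0 : 0 ≤ Real.sqrt 2 := Real.sqrt_nonneg 2
  have hpos : 0 < lam := by linarith
  -- `D = (λ² - 2λ - 1)(λ² + 2λ - 1)`, and `1 + √2` is the larger root of the first factor.
  have hA : 0 < lam ^ 2 - 2 * lam - 1 := by nlinarith
  have hD : 0 < 1 - 6 * lam ^ 2 + lam ^ 4 := by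
    have h := mul_pos hA (show 0 < lam ^ 2 + 2 * lam - 1 by linarith)
    linarith [show (lam ^ 2 - 2 * lam - 1) * (lam ^ 2 + 2 * lam - 1)
      = 1 - 6 * lam ^ 2 + lam ^ 4 by ring]
  refine ⟨hD, crossRatio_of_sum_prod (pow_pos hpos 2).ne' (by ring) ?_⟩
  linear_combination (-1 / 4) * Real.sq_sqrt hD.le
end

section
/- The real number t₀ = (−12 − √70 − √(210 + 24√70))/2 is a root of the polynomial P₅(t) = 1 + 25t + 100t² + 100t³ + 25t⁴ + t⁵, and every real root r of P₅ satisfies r ≥ t₀ (i.e., t₀ is the smallest real zero of P₅, numerically ≈ −20.3174). -/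
/-! With `s = √70`, the palindromic polynomial `P₅` factors as
`(1 + t)(t² + (12 + s)t + 1)(t² + (12 - s)t + 1)`: divide by `1 + t` and substitute `u = t + 1/t`.
The number `t₀` is the smaller root of `q(t) = t² + (12 + s)t + 1`, whose discriminant is
`(12 + s)² - 4 = 210 + 24s`. Every real root `r` of `P₅` is negative and satisfies `q(r) ≤ 0`
(on the third factor, `q(r) = 2sr`), so it lies to the right of `t₀`. -/

/-- The real number `t₀ = (-12 - √70 - √(210 + 24√70))/2` is a root of
`P₅(t) = 1 + 25t + 100t² + 100t³ + 25t⁴ + t⁵`, and every real root `r` of `P₅` satisfies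
`r ≥ t₀`, i.e. `t₀` is the smallest real zero of `P₅`. -/
theorem stmt_15 :
    (1 + 25 * ((-12 - Real.sqrt 70 - Real.sqrt (210 + 24 * Real.sqrt 70)) / 2)
      + 100 * ((-12 - Real.sqrt 70 - Real.sqrt (210 + 24 * Real.sqrt 70)) / 2) ^ 2
      + 100 * ((-12 - Real.sqrt 70 - Real.sqrt (210 + 24 * Real.sqrt 70)) / 2) ^ 3
      + 25 * ((-12 - Real.sqrt 70 - Real.sqrt (210 + 24 * Real.sqrt 70)) / 2) ^ 4
      + ((-12 - Real.sqrt 70 - Real.sqrt (210 + 24 * Real.sqrt 70)) / 2) ^ 5 = 0) ∧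
    (∀ r : ℝ, 1 + 25 * r + 100 * r ^ 2 + 100 * r ^ 3 + 25 * r ^ 4 + r ^ 5 = 0 →
      (-12 - Real.sqrt 70 - Real.sqrt (210 + 24 * Real.sqrt 70)) / 2 ≤ r) := by
  have hs : Real.sqrt 70 ^ 2 = 70 := Real.sq_sqrt (by norm_num)
  have hs0 : 0 ≤ Real.sqrt 70 := Real.sqrt_nonneg 70
  have hw : Real.sqrt (210 + 24 * Real.sqrt 70) ^ 2 = 210 + 24 * Real.sqrt 70 :=
    Real.sq_sqrt (by positivity)
  have hw0 : 0 ≤ Real.sqrt (210 + 24 * Real.sqrt 70) := Real.sqrt_nonneg _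
  generalize Real.sqrt (210 + 24 * Real.sqrt 70) = w at *
  generalize Real.sqrt 70 = s at *
  have factor : ∀ t : ℝ, 1 + 25 * t + 100 * t ^ 2 + 100 * t ^ 3 + 25 * t ^ 4 + t ^ 5
      = (1 + t) * (t ^ 2 + (12 + s) * t + 1) * (t ^ 2 + (12 - s) * t + 1) := by
    intro t
    linear_combination (1 + t) * t ^ 2 * hs
  constructor
  · have hq : ((-12 - s - w) / 2) ^ 2 + (12 + s) * ((-12 - s - w) / 2) + 1 = 0 := by
      linear_combination hw / 4 - hs / 4
    rw [factor, hq]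
    ring
  · intro r hr
    have hneg : r < 0 := by
      by_contra! h
      have : 0 < 1 + 25 * r + 100 * r ^ 2 + 100 * r ^ 3 + 25 * r ^ 4 + r ^ 5 := by positivity
      linarith
    have hq : r ^ 2 + (12 + s) * r + 1 ≤ 0 := by
      rw [factor] at hr
      rcases mul_eq_zero.mp hr with h | h
      · rcases mul_eq_zero.mp h with h | h
        · obtain rfl : r = -1 := by linarith
          linarith
        · exact h.le
      · linarith [mul_nonpos_of_nonneg_of_nonpos hs0 hneg.le]
    -- Completing the square turns `q(r) ≤ 0` into `|2r + 12 + s| ≤ w`.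
    have habs : |2 * r + 12 + s| ≤ w := abs_le_of_sq_le_sq (by linarith) hw0
    linarith [neg_le_of_abs_le habs]
end
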